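/- Let G be a connected graph with σ_2 ≥ t_3 − 2. Then t_2 ≥ t_3 − 1. (Corollary 14) -/

import Mathlib

open SimpleGraph

variable {V : Type*}

/-- A set of vertices is independent in `G`. -/
def IsIndSet (G : SimpleGraph V) (s : Set V) : Prop :=
  ∀ ⦃u⦄, u ∈ s → ∀ ⦃v⦄, v ∈ s → ¬ G.Adj u v

/-- The number of end-vertices (vertices of degree one) of a subgraph `H`. -/
noncomputable def endVertexCount {G : SimpleGraph V} (H : G.Subgraph) : ℕ :=
  {v : V | v ∈ H.verts ∧ (H.neighborSet v).ncard = 1}.ncard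

/-- `H` is a cycle; a single vertex and a single edge are regarded as
simple cycles of orders 1 and 2, respectively. -/
def IsCycleSubgraph {G : SimpleGraph V} (H : G.Subgraph) : Prop :=
  H.Connected ∧ (H.verts.ncard ≤ 2 ∨ ∀ v ∈ H.verts, (H.neighborSet v).ncard = 2)

/-- `H` is a `k`-ended tree in `G`: a tree with at most `k` end-vertices (leaves);
a cycle is regarded as a 1-ended tree. -/
def IsKEndedTree (G : SimpleGraph V) (k : ℕ) (H : G.Subgraph) : Prop :=
  (H.coe.IsTree ∧ endVertexCount H ≤ k) ∨ (1 ≤ k ∧ IsCycleSubgraph H)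

/-- `t k`: the order of a largest `k`-ended tree in `G`. -/
noncomputable def maxKEndedOrder (G : SimpleGraph V) (k : ℕ) : ℕ :=
  sSup {n | ∃ H : G.Subgraph, IsKEndedTree G k H ∧ H.verts.ncard = n}

/-- `σ m`: the minimum degree sum over independent sets of `m` vertices of `G`,
and `+∞` if the independence number of `G` is less than `m`. -/
noncomputable def minDegreeSum (G : SimpleGraph V) [Fintype V] [DecidableRel G.Adj]
    (m : ℕ) : ℕ∞ :=
  ⨅ s ∈ {s : Finset V | s.card = m ∧ IsIndSet G ↑s}, (∑ v ∈ s, G.degree v : ℕ∞)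

/-!
Suppose `t₂ + 1 < t₃`. Then a largest 3-ended tree has exactly three leaves, so it consists of a
path `P` between two leaves `x` and `y` and a path `D` attached to `P`. By maximality all neighbours
of `x` and `y` lie on it, while a path of `G` on all of its vertices, or on all of them but one,
would be too long. Hence `x` and `y` are not adjacent, and whenever `a`, `b` are consecutive on `P`
or on `D`, the edges `ya` and `xb` are not both present, since otherwise the tree could be rerouted
into a path on the same vertices. For the same reason `x` misses the first vertex of `D` and `y` its
first and last ones; an edge from `x` to the second vertex would give a path missing only the first.
Counting neighbours along `P` and `D` yields `deg x + deg y ≤ (|P| - 1) + (|D| - 2) = t₃ - 3`.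
-/

section Lists

variable {α : Type*}

theorem countP_add_countP_cons_le_length {p q : α → Prop} [DecidablePred p] [DecidablePred q]
    {a : α} {l : List α} (hchain : (a :: l).IsChain fun b c => ¬(q b ∧ p c))
    (hlast : ∀ z ∈ (a :: l).getLast?, ¬q z) :
    l.countP p + (a :: l).countP q ≤ l.length := by
  induction l generalizing a with
  | nil => simpa using hlast
  | cons b l ih =>
    rw [List.isChain_cons_cons] at hchain
    have := ih hchain.2 (by simpa using hlast)
    simp only [List.countP_cons, List.length_cons, decide_eq_true_eq] at this ⊢
    grind

theorem isChain_append_of_rel {R : α → α → Prop} {L₁ L₂ : List α} {a b : α}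
    (h₁ : L₁.IsChain R) (h₂ : L₂.IsChain R) (ha : L₁.getLast? = some a) (hb : L₂.head? = some b)
    (hab : R a b) : (L₁ ++ L₂).IsChain R :=
  List.isChain_append.2 ⟨h₁, h₂, by simpa [ha, hb] using hab⟩

theorem exists_perm_isChain_getLast?_eq {R : α → α → Prop} {C : List α} {a b c : α}
    (hC : C.IsChain R) (ha : C.getLast? = some a) (hb : C.head? = some b) (hab : R a b)
    (hc : c ∈ C) : ∃ C' : List α, C'.Perm C ∧ C'.IsChain R ∧ C'.getLast? = some c := by
  obtain ⟨U, W, rfl⟩ := List.append_of_mem hc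
  refine ⟨W ++ (U ++ [c]), ?_, ?_, by simp⟩
  · simpa using List.perm_append_comm (l₁ := W) (l₂ := U ++ [c])
  · rw [List.isChain_split] at hC
    refine List.isChain_append.2 ⟨hC.2.tail, hC.1, fun a' ha' b' hb' => ?_⟩
    have hW : a' = a := by cases W <;> simp_all
    have hU : b' = b := by cases U <;> simp_all
    rwa [hW, hU]

end Lists

theorem isChain_adj_reverse {G : SimpleGraph V} {L : List V} (hL : L.IsChain G.Adj) :
    L.reverse.IsChain G.Adj :=
  List.isChain_reverse.2 (hL.imp fun _ _ => Adj.symm)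

theorem degree_le_countP_of_neighborSet_subset {G : SimpleGraph V} {x : V} [DecidablePred (G.Adj x)]
    [Fintype (G.neighborSet x)] {L : List V} (h : G.neighborSet x ⊆ {w | w ∈ L}) :
    G.degree x ≤ L.countP (G.Adj x ·) := by
  classical
  rw [List.countP_eq_length_filter, ← G.card_neighborFinset_eq_degree]
  refine (Finset.card_le_card fun w hw => ?_).trans (List.toFinset_card_le _)
  have hxw : G.Adj x w := (G.mem_neighborFinset x w).1 hw
  simpa [hxw] using h hxw

/-- The vertices listed in `S` can be reordered so as to form a path: the subgraph induced on them
has a Hamiltonian path (when `S` has no repetitions). -/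
def IsTraceable (G : SimpleGraph V) (S : List V) : Prop :=
  ∃ L : List V, L.Perm S ∧ L.IsChain G.Adj

theorem IsTraceable.perm {G : SimpleGraph V} {S S' : List V} (h : IsTraceable G S)
    (hS : S.Perm S') : IsTraceable G S' :=
  let ⟨L, hL, hchain⟩ := h
  ⟨L, hL.trans hS, hchain⟩

/-- A path `P` from `x` to `y` together with a disjoint path `D` (possibly empty) whose first vertex
is adjacent to some vertex of `P`. Both paths are encoded as the lists of their vertices. -/
structure IsTripod (G : SimpleGraph V) (x y : V) (P D : List V) : Prop where
  isChain_body : P.IsChain G.Adj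
  isChain_leg : D.IsChain G.Adj
  nodup : (P ++ D).Nodup
  head?_body : P.head? = some x
  getLast?_body : P.getLast? = some y
  exists_adj_head_leg : ∀ d ∈ D.head?, ∃ c ∈ P, G.Adj c d

namespace IsTripod

variable {G : SimpleGraph V} {x y : V} {P D : List V}

theorem reverse (h : IsTripod G x y P D) : IsTripod G y x P.reverse D where
  isChain_body := isChain_adj_reverse h.isChain_body
  isChain_leg := h.isChain_leg
  nodup := (((List.reverse_perm P).append_right D).nodup_iff).2 h.nodup
  head?_body := by rw [List.head?_reverse, h.getLast?_body]
  getLast?_body := by rw [List.getLast?_reverse, h.head?_body]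
  exists_adj_head_leg := by simpa only [List.mem_reverse] using h.exists_adj_head_leg

theorem map {V' : Type*} {G' : SimpleGraph V'} (h : IsTripod G x y P D) (f : G →g G')
    (hf : Function.Injective f) : IsTripod G' (f x) (f y) (P.map f) (D.map f) where
  isChain_body := List.isChain_map_of_isChain f (fun _ _ => f.map_adj) h.isChain_body
  isChain_leg := List.isChain_map_of_isChain f (fun _ _ => f.map_adj) h.isChain_leg
  nodup := List.map_append ▸ h.nodup.map hf
  head?_body := by simp [h.head?_body]
  getLast?_body := by simp [h.getLast?_body]
  exists_adj_head_leg d' hd' := by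
    rw [List.head?_map, Option.mem_map] at hd'
    obtain ⟨d, hd, rfl⟩ := hd'
    obtain ⟨c, hc, hcd⟩ := h.exists_adj_head_leg d hd
    exact ⟨f c, List.mem_map_of_mem hc, f.map_adj hcd⟩

theorem isTraceable_append_of_adj_right (h : IsTripod G x y P D) {E : List V} {e : V}
    (hE : E.IsChain G.Adj) (he : E.head? = some e) (hye : G.Adj y e) : IsTraceable G (P ++ E) :=
  ⟨P ++ E, .refl _, isChain_append_of_rel h.isChain_body hE h.getLast?_body he hye⟩

theorem isTraceable_append_of_adj_left (h : IsTripod G x y P D) {E : List V} {e : V}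
    (hE : E.IsChain G.Adj) (he : E.head? = some e) (hxe : G.Adj x e) : IsTraceable G (P ++ E) :=
  (h.reverse.isTraceable_append_of_adj_right hE he hxe).perm ((List.reverse_perm P).append_right E)

-- Open the cycle at the vertex to which `D` is attached, and continue along `D`.
theorem isTraceable_of_cycle (h : IsTripod G x y P D) {C : List V} {a b : V}
    (hC : C.IsChain G.Adj) (hCP : C.Perm P) (ha : C.getLast? = some a) (hb : C.head? = some b)
    (hab : G.Adj a b) : IsTraceable G (P ++ D) := by
  rcases hD : D.head? with - | d
  · rw [List.head?_eq_none_iff.1 hD, List.append_nil]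
    exact ⟨C, hCP, hC⟩
  · obtain ⟨c, hc, hcd⟩ := h.exists_adj_head_leg d hD
    obtain ⟨C', hperm, hC', hlast⟩ :=
      exists_perm_isChain_getLast?_eq hC ha hb hab (hCP.mem_iff.2 hc)
    exact ⟨C' ++ D, (hperm.trans hCP).append_right D,
      isChain_append_of_rel hC' h.isChain_leg hlast hD hcd⟩

theorem isTraceable_of_adj (h : IsTripod G x y P D) (hxy : G.Adj x y) : IsTraceable G (P ++ D) :=
  h.isTraceable_of_cycle h.isChain_body (.refl P) h.getLast?_body h.head?_body hxy.symm

-- The cycle is `x … a y … b x`.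
theorem isTraceable_of_crossing_body (h : IsTripod G x y P D) {l₁ l₂ : List V} {a b : V}
    (hP : P = l₁ ++ a :: b :: l₂) (hya : G.Adj y a) (hxb : G.Adj x b) :
    IsTraceable G (P ++ D) := by
  have hchain := h.isChain_body
  rw [hP, List.isChain_append_cons_cons] at hchain
  have hhead : (l₁ ++ [a] ++ (b :: l₂).reverse).head? = some x := by
    rw [← h.head?_body, hP]; cases l₁ <;> simp
  have hlast : (b :: l₂).getLast? = some y := by simpa [hP] using h.getLast?_body
  have hcycle : (l₁ ++ [a] ++ (b :: l₂).reverse).IsChain G.Adj :=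
    isChain_append_of_rel hchain.1 (isChain_adj_reverse hchain.2.2) List.getLast?_concat
      (by rw [List.head?_reverse, hlast]) hya.symm
  refine h.isTraceable_of_cycle hcycle ?_
    (by rw [List.getLast?_append, List.getLast?_reverse]; rfl) hhead hxb.symm
  simpa [hP] using (List.reverse_perm (b :: l₂)).append_left (l₁ ++ [a])

-- The path runs from the far end of `D` down to `b`, along `P` from `x` to `y`, and from `a` down
-- to the near end of `D`.
theorem isTraceable_of_crossing_leg (h : IsTripod G x y P D) {l₁ l₂ : List V} {a b : V}
    (hD : D = l₁ ++ a :: b :: l₂) (hya : G.Adj y a) (hxb : G.Adj x b) :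
    IsTraceable G (P ++ D) := by
  have hchain := h.isChain_leg
  rw [hD, List.isChain_append_cons_cons] at hchain
  have hright : (P ++ (l₁ ++ [a]).reverse).IsChain G.Adj :=
    isChain_append_of_rel h.isChain_body (isChain_adj_reverse hchain.1) h.getLast?_body
      (by simp) hya
  refine ⟨(b :: l₂).reverse ++ (P ++ (l₁ ++ [a]).reverse), ?_,
    isChain_append_of_rel (isChain_adj_reverse hchain.2.2) hright (a := b) (by simp)
      (by simp [h.head?_body]) hxb.symm⟩
  classical
  rw [hD, List.perm_iff_count]
  intro v
  simp only [List.count_append, List.count_reverse, List.count_cons, List.count_nil]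
  omega

theorem two_le_length_leg (h : IsTripod G x y P D) (htail : ¬IsTraceable G (P ++ D.tail)) :
    2 ≤ D.length := by
  by_contra! hlt
  have hnil : D.tail = [] := List.length_eq_zero_iff.1 (by simp; omega)
  exact htail ⟨P, by simp [hnil], h.isChain_body⟩

theorem countP_body_lt_length [DecidableRel G.Adj] (h : IsTripod G x y P D)
    (hPD : ¬IsTraceable G (P ++ D)) :
    P.countP (G.Adj x ·) + P.countP (G.Adj y ·) < P.length := by
  obtain ⟨P, rfl⟩ : ∃ P', P = x :: P' := ⟨P.tail, (List.cons_head?_tail h.head?_body).symm⟩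
  rw [List.countP_cons_of_neg (by simp), List.length_cons, Nat.lt_succ_iff]
  refine countP_add_countP_cons_le_length ?_ (by simp [h.getLast?_body])
  rw [List.isChain_iff_forall_rel_of_append_cons_cons]
  exact fun _ _ _ _ hP ⟨hya, hxb⟩ => hPD (h.isTraceable_of_crossing_body hP hya hxb)

theorem countP_leg_add_two_le_length [DecidableRel G.Adj] (h : IsTripod G x y P D)
    (hPD : ¬IsTraceable G (P ++ D)) (htail : ¬IsTraceable G (P ++ D.tail)) :
    D.countP (G.Adj x ·) + D.countP (G.Adj y ·) + 2 ≤ D.length := by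
  obtain ⟨d₁, d₂, D, rfl⟩ : ∃ d₁ d₂ D', D = d₁ :: d₂ :: D' := by
    match D, h.two_le_length_leg htail with
    | d₁ :: d₂ :: D', _ => exact ⟨d₁, d₂, D', rfl⟩
  have hx₁ : ¬G.Adj x d₁ := fun hadj =>
    hPD (h.isTraceable_append_of_adj_left h.isChain_leg rfl hadj)
  have hx₂ : ¬G.Adj x d₂ := fun hadj =>
    htail (h.isTraceable_append_of_adj_left h.isChain_leg.tail rfl hadj)
  have hy₁ : ¬G.Adj y d₁ := fun hadj =>
    hPD (h.isTraceable_append_of_adj_right h.isChain_leg rfl hadj)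
  have hylast : ∀ z ∈ (d₂ :: D).getLast?, ¬G.Adj y z := fun z hz hadj =>
    hPD ((h.isTraceable_append_of_adj_right (isChain_adj_reverse h.isChain_leg)
      (by rwa [List.head?_reverse, List.getLast?_cons_cons]) hadj).perm
        ((List.reverse_perm _).append_left P))
  have hcross : (d₁ :: d₂ :: D).IsChain fun a b => ¬(G.Adj y a ∧ G.Adj x b) := by
    rw [List.isChain_iff_forall_rel_of_append_cons_cons]
    exact fun _ _ _ _ hD ⟨hya, hxb⟩ => hPD (h.isTraceable_of_crossing_leg hD hya hxb)
  have hcount := countP_add_countP_cons_le_length hcross.tail hylast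
  rw [List.countP_cons_of_neg (by simpa using hx₁), List.countP_cons_of_neg (by simpa using hx₂),
    List.countP_cons_of_neg (by simpa using hy₁)]
  simpa only [List.length_cons, add_le_add_iff_right] using hcount

theorem degree_add_degree_add_three_le (h : IsTripod G x y P D)
    [Fintype (G.neighborSet x)] [Fintype (G.neighborSet y)] (hPD : ¬IsTraceable G (P ++ D))
    (htail : ¬IsTraceable G (P ++ D.tail)) (hx : G.neighborSet x ⊆ {w | w ∈ P ++ D})
    (hy : G.neighborSet y ⊆ {w | w ∈ P ++ D}) :
    G.degree x + G.degree y + 3 ≤ P.length + D.length := by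
  classical
  have hdx := degree_le_countP_of_neighborSet_subset hx
  have hdy := degree_le_countP_of_neighborSet_subset hy
  rw [List.countP_append] at hdx hdy
  have hbody := h.countP_body_lt_length hPD
  have hleg := h.countP_leg_add_two_le_length hPD htail
  omega

end IsTripod

section Trees

variable {W : Type*} {T : SimpleGraph W}

theorem isTripod_of_isPath {x y c z : W} {p : T.Walk x y} {r : T.Walk c z} (hp : p.IsPath)
    (hr : r.IsPath) (hc : c ∈ p.support) (hdisj : p.support.Disjoint r.support.tail) :
    IsTripod T x y p.support r.support.tail where
  isChain_body := p.isChain_adj_support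
  isChain_leg := r.isChain_adj_support.tail
  nodup := hp.support_nodup.append hr.support_nodup.tail hdisj
  head?_body := by rw [List.head?_eq_some_head p.support_ne_nil, p.head_support]
  getLast?_body := by rw [List.getLast?_eq_some_getLast p.support_ne_nil, p.getLast_support]
  exists_adj_head_leg d hd := by
    have hchain := r.isChain_adj_support
    rw [← r.cons_tail_support] at hchain
    exact ⟨c, hc, (List.isChain_cons.1 hchain).1 d hd⟩

-- A longest path that starts at `x` and passes through `v` cannot be prolonged.
theorem exists_isPath_to_leaf [Finite W] (hT : T.IsAcyclic) {x v : W} (hreach : T.Reachable x v)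
    (hv : v ≠ x) :
    ∃ (e : W) (p : T.Walk x e), p.IsPath ∧ v ∈ p.support ∧ (T.neighborSet e).ncard = 1 := by
  have := Fintype.ofFinite W
  let s := {n | ∃ (e : W) (p : T.Walk x e), p.IsPath ∧ v ∈ p.support ∧ p.length = n}
  have hfin : s.Finite := (Set.finite_le_nat (Fintype.card W)).subset
    fun n ⟨_, _, hp, _, hn⟩ => hn ▸ hp.length_lt.le
  obtain ⟨q, hq⟩ := hreach.exists_isPath
  obtain ⟨_, ⟨e, p, hp, hvp, rfl⟩, hmax⟩ :=
    hfin.exists_maximal ⟨_, v, q, hq, q.end_mem_support, rfl⟩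
  have hnil : ¬p.Nil := fun hnil => hv (by simpa [Walk.nil_iff_support_eq.1 hnil] using hvp)
  have hlast : ∀ f, T.Adj e f → f ∈ p.support := fun f hf => by
    by_contra hfp
    have := hmax ⟨f, p.concat hf, hp.concat hfp hf, p.support_subset_support_concat hf hvp, rfl⟩
      (by simp)
    simp at this
  refine ⟨e, p, hp, hvp, Set.ncard_eq_one.2 ⟨p.penultimate, Set.Subset.antisymm ?_ ?_⟩⟩
  · exact fun f hf => hT.eq_penultimate_of_adj_end hp hf (hlast f hf)
  · exact Set.singleton_subset_iff.2 (p.adj_penultimate hnil).symm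

theorem isPath_append_of_disjoint {u v w : W} {p : T.Walk u v} {q : T.Walk v w} (hp : p.IsPath)
    (hq : q.IsPath) (hdisj : p.support.Disjoint q.support.tail) : (p.append q).IsPath := by
  rw [Walk.isPath_def, Walk.support_append]
  exact hp.support_nodup.append hq.support_nodup.tail hdisj

theorem exists_isPath_support_tail_disjoint {x z : W} (q : T.Walk x z) (hq : q.IsPath)
    {S : List W} (hx : x ∈ S) :
    ∃ c ∈ S, ∃ r : T.Walk c z, r.IsPath ∧ S.Disjoint r.support.tail := by
  classical
  obtain ⟨c, hc, hcq, hfirst⟩ :=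
    q.reverse.exists_mem_support_forall_mem_support_imp_eq S.toFinset ⟨x, by simpa using hx⟩
  have hr := (hq.reverse.takeUntil hcq).reverse
  refine ⟨c, List.mem_toFinset.1 hc, _, hr, fun t htS ht => ?_⟩
  have htc : t = c :=
    hfirst t (List.mem_toFinset.2 htS) (by simpa using List.mem_of_mem_tail ht)
  have hnodup := hr.support_nodup
  rw [← Walk.cons_tail_support, List.nodup_cons] at hnodup
  exact hnodup.1 (htc ▸ ht)

-- Branch off the path from `x` to `y` at the vertex `c` closest to `z`; by uniqueness of paths in a
-- tree, the path from `x` to `z` passes through `c`.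
theorem exists_isTripod_support_subset (hT : T.IsTree) (x y z : W) :
    ∃ P D : List W, IsTripod T x y P D ∧
      (∀ p : T.Walk x y, p.IsPath → p.support ⊆ P ++ D) ∧
      ∀ q : T.Walk x z, q.IsPath → q.support ⊆ P ++ D := by
  classical
  obtain ⟨p, hp, hp_unique⟩ := hT.existsUnique_path x y
  obtain ⟨q, hq, hq_unique⟩ := hT.existsUnique_path x z
  obtain ⟨c, hc, r, hr, hdisj⟩ := exists_isPath_support_tail_disjoint q hq p.start_mem_support
  have hsub := p.support_takeUntil_subset_support hc
  have hpath : ((p.takeUntil c hc).append r).IsPath :=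
    isPath_append_of_disjoint (hp.takeUntil hc) hr (List.disjoint_of_subset_left hsub hdisj)
  refine ⟨p.support, r.support.tail, isTripod_of_isPath hp hr hc hdisj, fun p' hp' => ?_,
    fun q' hq' => ?_⟩
  · exact hp_unique p' hp' ▸ List.subset_append_left _ _
  · rw [hq_unique q' hq', ← hq_unique _ hpath, Walk.support_append]
    exact fun v => by simpa only [List.mem_append] using Or.imp_left (@hsub v)

theorem exists_isTripod_of_isTree [Finite W] (hT : T.IsTree) {x y z : W}
    (hleaf : ∀ e, (T.neighborSet e).ncard = 1 → e = x ∨ e = y ∨ e = z) :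
    ∃ P D : List W, IsTripod T x y P D ∧ ∀ v, v ∈ P ++ D := by
  obtain ⟨P, D, htripod, hy, hz⟩ := exists_isTripod_support_subset hT x y z
  refine ⟨P, D, htripod, fun v => ?_⟩
  rcases eq_or_ne v x with rfl | hvx
  · exact List.mem_append_left D (List.mem_of_mem_head? htripod.head?_body)
  obtain ⟨e, p, hp, hvp, he⟩ := exists_isPath_to_leaf hT.isAcyclic (hT.connected x v) hvx
  rcases hleaf e he with rfl | rfl | rfl
  · rw [(Walk.isPath_iff_nil.1 hp).eq_nil, Walk.mem_support_nil_iff] at hvp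
    exact absurd hvp hvx
  · exact hy p hp hvp
  · exact hz p hp hvp

end Trees

section EndVertices

variable {G : SimpleGraph V} {H : G.Subgraph}

/-- The set of end-vertices (vertices of degree one) of a subgraph, of which `endVertexCount` is the
cardinality. -/
def endVertices (H : G.Subgraph) : Set V :=
  {v | v ∈ H.verts ∧ (H.neighborSet v).ncard = 1}

theorem isTree_coe_sup_subgraphOfAdj [Finite V] (hH : H.coe.IsTree) {u w : V} (hu : u ∈ H.verts)
    (hw : w ∉ H.verts) (huw : G.Adj u w) : (H ⊔ G.subgraphOfAdj huw).coe.IsTree := by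
  have hcard (K : G.Subgraph) : Nat.card K.coe.edgeSet = K.edgeSet.ncard := by
    rw [← K.image_coe_edgeSet_coe,
      Set.ncard_image_of_injective _ (Sym2.map.injective Subtype.val_injective),
      Nat.card_coe_set_eq]
  rw [isTree_iff_connected_and_card, hcard, Nat.card_coe_set_eq] at hH ⊢
  have hedge : s(u, w) ∉ H.edgeSet := fun h => hw (H.edge_vert (H.adj_symm h))
  have hverts : (H ⊔ G.subgraphOfAdj huw).verts = insert w H.verts := by
    ext v; simp; grind
  refine ⟨(Subgraph.connected_sup (Subgraph.Connected.mk hH.1).preconnected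
    (Subgraph.subgraphOfAdj_connected huw).preconnected ⟨u, hu, by simp⟩).coe, ?_⟩
  rw [hverts, Set.ncard_insert_of_notMem hw, ← hH.2, Subgraph.edgeSet_sup,
    edgeSet_subgraphOfAdj, Set.union_singleton, Set.ncard_insert_of_notMem hedge]

theorem endVertices_sup_subgraphOfAdj_subset {u w : V} (hw : w ∉ H.verts) (huw : G.Adj u w)
    (hdeg : (H.neighborSet u).Nonempty) :
    endVertices (H ⊔ G.subgraphOfAdj huw) ⊆ insert w (endVertices H \ {u}) := by
  rintro v ⟨hv, hcard⟩
  by_cases hvw : v = w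
  · exact Or.inl hvw
  have hvu : v ≠ u := by
    rintro rfl
    obtain ⟨a, ha⟩ := hdeg
    have haw : a = w :=
      (Set.ncard_le_one_iff (Set.finite_of_ncard_ne_zero (hcard.trans_ne one_ne_zero))).1 hcard.le
        (Or.inl ha) (Or.inr (by simp))
    exact hw (haw ▸ H.edge_vert (H.adj_symm ha))
  refine Or.inr ⟨⟨by simpa [hvw, hvu] using hv, ?_⟩, hvu⟩
  rwa [Subgraph.neighborSet_sup, neighborSet_subgraphOfAdj_of_ne_of_ne huw hvu hvw,
    Set.union_empty] at hcard

theorem isTree_coe_toSubgraph_of_isPath [Finite V] {u v : V} {p : G.Walk u v} (hp : p.IsPath) :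
    p.toSubgraph.coe.IsTree := by
  induction p with
  | nil => exact IsTree.coe_singletonSubgraph G _
  | cons hadj p ih =>
    rw [Walk.cons_isPath_iff] at hp
    rw [Walk.toSubgraph, sup_comm, ← subgraphOfAdj_symm hadj]
    exact isTree_coe_sup_subgraphOfAdj (ih hp.1) p.start_mem_verts_toSubgraph
      (by simpa using hp.2) hadj.symm

theorem endVertices_toSubgraph_subset_of_isPath {u v : V} {p : G.Walk u v} (hp : p.IsPath) :
    endVertices p.toSubgraph ⊆ {u, v} := by
  rintro w ⟨hw, hcard⟩
  obtain ⟨i, rfl, hi⟩ := Walk.mem_support_iff_exists_getVert.1 (p.mem_verts_toSubgraph.1 hw)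
  by_contra! hne
  have hi₀ : i ≠ 0 := by rintro rfl; simp at hne
  have hi₁ : i ≠ p.length := by rintro rfl; simp at hne
  have := hp.ncard_neighborSet_toSubgraph_internal_eq_two hi₀ (lt_of_le_of_ne hi hi₁)
  omega

theorem mem_endVertices_of_ncard_neighborSet_coe {e : H.verts}
    (he : (H.coe.neighborSet e).ncard = 1) : (e : V) ∈ endVertices H :=
  ⟨e.2, by
    rwa [← Nat.card_coe_set_eq, ← Nat.card_congr (Subgraph.coeNeighborSetEquiv e),
      Nat.card_coe_set_eq]⟩

theorem exists_isTripod_of_ncard_endVertices_eq_three [Finite V] (hH : H.coe.IsTree)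
    (h3 : (endVertices H).ncard = 3) :
    ∃ x ∈ endVertices H, ∃ y ∈ endVertices H, x ≠ y ∧
      ∃ P D : List V, IsTripod G x y P D ∧ H.verts = {v | v ∈ P ++ D} := by
  obtain ⟨x, y, z, hxy, -, -, hxyz⟩ := Set.ncard_eq_three.1 h3
  have hx : x ∈ endVertices H := by simp [hxyz]
  have hy : y ∈ endVertices H := by simp [hxyz]
  have hz : z ∈ endVertices H := by simp [hxyz]
  obtain ⟨P, D, htripod, hall⟩ :=
    exists_isTripod_of_isTree hH (x := ⟨x, hx.1⟩) (y := ⟨y, hy.1⟩) (z := ⟨z, hz.1⟩) fun e he => by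
      simpa [hxyz, Subtype.ext_iff] using mem_endVertices_of_ncard_neighborSet_coe he
  refine ⟨x, hx, y, hy, hxy, _, _, htripod.map H.hom H.hom_injective, ?_⟩
  ext v
  rw [Set.mem_ofPred_eq, ← List.map_append, List.mem_map]
  exact ⟨fun hv => ⟨⟨v, hv⟩, hall _, rfl⟩, fun ⟨w, _, hw⟩ => hw ▸ w.2⟩

end EndVertices

section MaxKEndedOrder

variable [Finite V] {G : SimpleGraph V} {k : ℕ} {H : G.Subgraph}

theorem bddAbove_ncard_verts_isKEndedTree (G : SimpleGraph V) (k : ℕ) :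
    BddAbove {n | ∃ H : G.Subgraph, IsKEndedTree G k H ∧ H.verts.ncard = n} := by
  refine ⟨Nat.card V, ?_⟩
  rintro n ⟨H, -, rfl⟩
  exact Set.ncard_le_card H.verts

theorem IsKEndedTree.ncard_verts_le (hH : IsKEndedTree G k H) :
    H.verts.ncard ≤ maxKEndedOrder G k :=
  le_csSup (bddAbove_ncard_verts_isKEndedTree G k) ⟨H, hH, rfl⟩

theorem exists_isKEndedTree_ncard_eq_maxKEndedOrder (hpos : 0 < maxKEndedOrder G k) :
    ∃ H : G.Subgraph, IsKEndedTree G k H ∧ H.verts.ncard = maxKEndedOrder G k := by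
  refine Nat.sSup_mem (Set.nonempty_iff_ne_empty.2 fun hempty => ?_)
    (bddAbove_ncard_verts_isKEndedTree G k)
  simp [maxKEndedOrder, hempty] at hpos

theorem exists_isTree_of_maxKEndedOrder_lt_succ (hk : 1 ≤ k)
    (hlt : maxKEndedOrder G k < maxKEndedOrder G (k + 1)) :
    ∃ H : G.Subgraph, H.coe.IsTree ∧ (endVertices H).ncard = k + 1 ∧
      H.verts.ncard = maxKEndedOrder G (k + 1) := by
  obtain ⟨H, hH, hmax⟩ := exists_isKEndedTree_ncard_eq_maxKEndedOrder (Nat.zero_lt_of_lt hlt)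
  have hnot : ¬IsKEndedTree G k H := fun h => by
    have := h.ncard_verts_le
    omega
  rcases hH with ⟨hT, hends⟩ | ⟨-, hcycle⟩
  · refine ⟨H, hT, le_antisymm hends (Nat.succ_le_of_lt ?_), hmax⟩
    exact not_le.1 fun hle => hnot (Or.inl ⟨hT, hle⟩)
  · exact absurd (Or.inr ⟨hk, hcycle⟩) hnot

theorem length_lt_maxKEndedOrder_two_of_isPath {u v : V} {p : G.Walk u v} (hp : p.IsPath) :
    p.length < maxKEndedOrder G 2 := by
  classical
  have hends : endVertexCount p.toSubgraph ≤ 2 :=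
    calc (endVertices p.toSubgraph).ncard
        ≤ ({u, v} : Set V).ncard := Set.ncard_le_ncard (endVertices_toSubgraph_subset_of_isPath hp)
      _ ≤ ({v} : Set V).ncard + 1 := Set.ncard_insert_le u {v}
      _ = 2 := by rw [Set.ncard_singleton]
  have hcard : p.toSubgraph.verts.ncard = p.length + 1 := by
    rw [Walk.verts_toSubgraph, ← List.coe_toFinset, Set.ncard_coe_finset,
      List.toFinset_card_of_nodup hp.support_nodup, Walk.length_support]
  have hle := IsKEndedTree.ncard_verts_le (Or.inl ⟨isTree_coe_toSubgraph_of_isPath hp, hends⟩)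
  omega

theorem IsTraceable.length_le_maxKEndedOrder_two {S : List V} (h : IsTraceable G S)
    (hS : S.Nodup) : S.length ≤ maxKEndedOrder G 2 := by
  obtain ⟨L, hperm, hchain⟩ := h
  rw [← hperm.length_eq]
  rcases eq_or_ne L [] with rfl | hne
  · exact Nat.zero_le _
  have hpath : (Walk.ofSupport L hne hchain).IsPath := by
    rw [Walk.isPath_def, Walk.support_ofSupport]
    exact hperm.nodup_iff.2 hS
  have := length_lt_maxKEndedOrder_two_of_isPath hpath
  rw [Walk.length_ofSupport] at this
  omega

theorem neighborSet_subset_verts_of_mem_endVertices (hH : H.coe.IsTree)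
    (hends : endVertexCount H ≤ k) (hmax : H.verts.ncard = maxKEndedOrder G k) {u : V}
    (hu : u ∈ endVertices H) : G.neighborSet u ⊆ H.verts := by
  intro w (huw : G.Adj u w)
  by_contra hw
  have hne : (H.neighborSet u).Nonempty := Set.nonempty_of_ncard_ne_zero (by simp [hu.2])
  have hends' : endVertexCount (H ⊔ G.subgraphOfAdj huw) ≤ k :=
    calc (endVertices (H ⊔ G.subgraphOfAdj huw)).ncard
        ≤ (insert w (endVertices H \ {u})).ncard :=
          Set.ncard_le_ncard (endVertices_sup_subgraphOfAdj_subset hw huw hne)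
      _ ≤ (endVertices H \ {u}).ncard + 1 := Set.ncard_insert_le _ _
      _ = (endVertices H).ncard := Set.ncard_sdiff_singleton_add_one hu
      _ ≤ k := hends
  have hle : (H ⊔ G.subgraphOfAdj huw).verts.ncard ≤ maxKEndedOrder G k :=
    IsKEndedTree.ncard_verts_le (Or.inl ⟨isTree_coe_sup_subgraphOfAdj hH hu.1 hw huw, hends'⟩)
  have hlt : H.verts.ncard < (H ⊔ G.subgraphOfAdj huw).verts.ncard :=
    Set.ncard_lt_ncard ((Set.ssubset_iff_of_subset Set.subset_union_left).2 ⟨w, by simp, hw⟩)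
  omega

end MaxKEndedOrder

theorem exists_not_adj_degree_add_degree_add_three_le [Fintype V] {G : SimpleGraph V}
    [DecidableRel G.Adj] (hlt : maxKEndedOrder G 2 + 1 < maxKEndedOrder G 3) :
    ∃ x y, x ≠ y ∧ ¬G.Adj x y ∧ G.degree x + G.degree y + 3 ≤ maxKEndedOrder G 3 := by
  classical
  obtain ⟨H, hT, hends, hmax⟩ :=
    exists_isTree_of_maxKEndedOrder_lt_succ one_le_two (Nat.lt_of_succ_lt hlt)
  obtain ⟨x, hx, y, hy, hxy, P, D, htripod, hverts⟩ :=
    exists_isTripod_of_ncard_endVertices_eq_three hT hends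
  have hlength : P.length + D.length = maxKEndedOrder G 3 := by
    rw [← hmax, hverts, ← List.coe_toFinset, Set.ncard_coe_finset,
      List.toFinset_card_of_nodup htripod.nodup, List.length_append]
  have hPD : ¬IsTraceable G (P ++ D) := fun h => by
    have := h.length_le_maxKEndedOrder_two htripod.nodup
    rw [List.length_append] at this
    omega
  have htail : ¬IsTraceable G (P ++ D.tail) := fun h => by
    have := h.length_le_maxKEndedOrder_two
      (htripod.nodup.sublist ((List.tail_sublist D).append_left P))
    rw [List.length_append, List.length_tail] at this
    omega
  have hN {u : V} (hu : u ∈ endVertices H) : G.neighborSet u ⊆ {w | w ∈ P ++ D} :=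
    hverts ▸ neighborSet_subset_verts_of_mem_endVertices hT hends.le hmax hu
  refine ⟨x, y, hxy, fun hadj => hPD (htripod.isTraceable_of_adj hadj), ?_⟩
  exact hlength ▸ htripod.degree_add_degree_add_three_le hPD htail (hN hx) (hN hy)

theorem minDegreeSum_two_le [Fintype V] {G : SimpleGraph V} [DecidableRel G.Adj] {x y : V}
    (hxy : x ≠ y) (hadj : ¬G.Adj x y) :
    minDegreeSum G 2 ≤ ((G.degree x + G.degree y : ℕ) : ℕ∞) := by
  classical
  have hind : IsIndSet G (({x, y} : Finset V) : Set V) := by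
    intro u hu v hv
    rw [Finset.coe_pair] at hu hv
    rcases hu with rfl | rfl <;> rcases hv with rfl | rfl
    exacts [G.loopless.irrefl _, hadj, fun h => hadj h.symm, G.loopless.irrefl _]
  refine (iInf₂_le ({x, y} : Finset V) ⟨Finset.card_pair hxy, hind⟩).trans_eq ?_
  rw [Finset.sum_pair hxy, Nat.cast_add]

theorem corollary14_general [Fintype V] (G : SimpleGraph V) [DecidableRel G.Adj]
    (h : (maxKEndedOrder G 3 : ℕ∞) ≤ minDegreeSum G 2 + 2) :
    maxKEndedOrder G 2 + 1 ≥ maxKEndedOrder G 3 := by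
  by_contra! hlt
  obtain ⟨x, y, hxy, hadj, hdeg⟩ := exists_not_adj_degree_add_degree_add_three_le hlt
  have hle : maxKEndedOrder G 3 ≤ G.degree x + G.degree y + 2 := by
    exact_mod_cast h.trans (add_le_add_left (minDegreeSum_two_le hxy hadj) 2)
  omega

/-- **Corollary 14.** If `G` is connected and `σ_2 ≥ t_3 - 2`, then `t_2 ≥ t_3 - 1`. -/
theorem corollary14 [Fintype V] (G : SimpleGraph V) [DecidableRel G.Adj]
    (hG : G.Connected)
    (h : (maxKEndedOrder G 3 : ℕ∞) ≤ minDegreeSum G 2 + 2) :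
    maxKEndedOrder G 2 + 1 ≥ maxKEndedOrder G 3 :=
  corollary14_general G h
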